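/- Let S and A be nonempty finite types, P : S → A → PMF S a transition kernel, ρ0 a probability distribution on S, and γ ∈ [0,1). Then for any two policies π and π', the ℓ¹-distance between their discounted state visitation distributions is bounded by an average divergence of the policies: Σ_s |d^{π'}(s) − d^π(s)| ≤ (2γ/(1−γ)) · Σ_s d^π(s) D_TV(π'‖π)[s]. -/

import Mathlib

open scoped BigOperators

section MDPdefs

variable {S A : Type*} [Fintype S] [Fintype A]

/-- The state-marginal distribution at time `t` under policy `π`:
`ρ_0 = ρ0` and `ρ_{t+1}(s') = ∑_s ∑_a ρ_t(s) π(a|s) P(s'|s,a)`. -/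
noncomputable def stateMarginal (P : S → A → PMF S) (ρ0 : PMF S) (π : S → PMF A) :
    ℕ → S → ℝ
  | 0, s => (ρ0 s).toReal
  | t + 1, s' => ∑ s : S, ∑ a : A,
      stateMarginal P ρ0 π t s * (π s a).toReal * (P s a s').toReal

/-- The discounted state visitation distribution `d^π(s) = (1-γ) ∑_t γ^t ρ_t^π(s)`. -/
noncomputable def dVisit (P : S → A → PMF S) (ρ0 : PMF S) (γ : ℝ) (π : S → PMF A)
    (s : S) : ℝ :=
  (1 - γ) * ∑' t : ℕ, γ ^ t * stateMarginal P ρ0 π t s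

/-- The discounted return `J_R(π) = ∑_t γ^t ∑_s ∑_a ρ_t^π(s) π(a|s) R(s,a)`. -/
noncomputable def Jret (P : S → A → PMF S) (ρ0 : PMF S) (γ : ℝ) (π : S → PMF A)
    (R : S → A → ℝ) : ℝ :=
  ∑' t : ℕ, γ ^ t * ∑ s : S, ∑ a : A,
      stateMarginal P ρ0 π t s * (π s a).toReal * R s a

/-- Total variational divergence between the action distributions of two policies at `s`. -/
noncomputable def dTV (π' π : S → PMF A) (s : S) : ℝ :=
  (1 / 2) * ∑ a : A, |(π' s a).toReal - (π s a).toReal|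

/-- Value function of `π` with reward `R`: expected discounted return started at `s`. -/
noncomputable def Vval (P : S → A → PMF S) (γ : ℝ) (π : S → PMF A) (R : S → A → ℝ)
    (s : S) : ℝ :=
  Jret P (PMF.pure s) γ π R

/-- State-action value function `Q^π_R(s,a) = R(s,a) + γ ∑_{s'} P(s'|s,a) V^π_R(s')`. -/
noncomputable def Qval (P : S → A → PMF S) (γ : ℝ) (π : S → PMF A) (R : S → A → ℝ)
    (s : S) (a : A) : ℝ :=
  R s a + γ * ∑ s' : S, (P s a s').toReal * Vval P γ π R s'

/-- Advantage function `A^π_R(s,a) = Q^π_R(s,a) - V^π_R(s)`. -/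
noncomputable def Aadv (P : S → A → PMF S) (γ : ℝ) (π : S → PMF A) (R : S → A → ℝ)
    (s : S) (a : A) : ℝ :=
  Qval P γ π R s a - Vval P γ π R s

/-- Kullback–Leibler divergence between the action distributions at state `s`. -/
noncomputable def dKL (π' π : S → PMF A) (s : S) : ℝ :=
  ∑ a : A, (π' s a).toReal * Real.log ((π' s a).toReal / (π s a).toReal)

end MDPdefs

/-!
Write `d`, `d'` for the visitation distributions of `π`, `π'`. Both solve a balance equation
`d = (1 - γ) ρ0 + γ T(d π)`, where `(d π)(s, a) = d(s) π(a|s)` and `T` moves state-action mass to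
states along `P`. Hence `d' - d = γ T(d' π' - d π)` with `d' π' - d π = (d' - d) π' + d (π' - π)`.
As `T` is an `ℓ¹`-contraction, `‖d' - d‖₁ ≤ γ ‖d' - d‖₁ + 2 γ ∑ d D_TV`, and it remains to
absorb the first term on the right into the left-hand side.
-/

lemma sum_pmf_toReal {α : Type*} [Fintype α] (p : PMF α) : ∑ a, (p a).toReal = 1 := by
  rw [← ENNReal.toReal_sum fun a _ => p.apply_ne_top a,
    ← tsum_fintype (L := .unconditional α), p.tsum_coe, ENNReal.toReal_one]

lemma tsum_pow_smul_eq_add_smul_map {R E : Type*} [Semiring R] [AddCommGroup E] [Module R E]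
    [TopologicalSpace E] [IsTopologicalAddGroup E] [ContinuousConstSMul R E] [T2Space E]
    {L : E →L[R] E} {x : ℕ → E} (hx : ∀ t, x (t + 1) = L (x t)) {r : R}
    (hsum : Summable fun t => r ^ t • x t) :
    ∑' t, r ^ t • x t = x 0 + r • L (∑' t, r ^ t • x t) := by
  have shift (t : ℕ) : r ^ (t + 1) • x (t + 1) = r • L (r ^ t • x t) := by
    rw [hx, map_smul, smul_smul, pow_succ']
  have tail : HasSum (fun t => r ^ (t + 1) • x (t + 1)) (r • L (∑' t, r ^ t • x t)) := by
    simpa only [shift] using (L.hasSum hsum.hasSum).const_smul r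
  calc ∑' t, r ^ t • x t = r ^ 0 • x 0 + ∑' t, r ^ (t + 1) • x (t + 1) := hsum.tsum_eq_zero_add
    _ = x 0 + r • L (∑' t, r ^ t • x t) := by rw [pow_zero, one_smul, tail.tsum_eq]

section Flow

variable {S A T : Type*}

/-- The state-action mass `(s, a) ↦ f(s) π(a|s)` obtained from a state mass `f` by choosing actions
according to `π`. The mass `f` is an arbitrary real function, so that differences of distributions
are allowed. -/
noncomputable def stateActionMass (π : S → PMF A) : (S → ℝ) →ₗ[ℝ] S → A → ℝ where
  toFun f s a := f s * (π s a).toReal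
  map_add' f g := by ext s a; exact add_mul ..
  map_smul' c f := by ext s a; exact mul_assoc ..

lemma stateActionMass_apply (π : S → PMF A) (f : S → ℝ) (s : S) (a : A) :
    stateActionMass π f s a = f s * (π s a).toReal := rfl

variable [Fintype A]

lemma sum_abs_stateActionMass (π : S → PMF A) (f : S → ℝ) (s : S) :
    ∑ a, |stateActionMass π f s a| = |f s| := by
  simp only [stateActionMass_apply, abs_mul, ENNReal.abs_toReal, ← Finset.mul_sum, sum_pmf_toReal,
    mul_one]

lemma sum_abs_stateActionMass_sub (π π' : S → PMF A) (f : S → ℝ) (s : S) :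
    ∑ a, |stateActionMass π' f s a - stateActionMass π f s a| = 2 * (|f s| * dTV π' π s) := by
  simp only [stateActionMass_apply, ← mul_sub, abs_mul, ← Finset.mul_sum, dTV]
  ring

variable [Fintype S]

lemma sum_abs_stateActionMass_sub_le (π π' : S → PMF A) (f f' : S → ℝ) :
    ∑ s, ∑ a, |stateActionMass π' f' s a - stateActionMass π f s a| ≤
      ∑ s, |f' s - f s| + 2 * ∑ s, |f s| * dTV π' π s := by
  rw [Finset.mul_sum, ← Finset.sum_add_distrib]
  refine Finset.sum_le_sum fun s _ => ?_
  calc ∑ a, |stateActionMass π' f' s a - stateActionMass π f s a|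
      ≤ ∑ a, (|stateActionMass π' f' s a - stateActionMass π' f s a| +
          |stateActionMass π' f s a - stateActionMass π f s a|) :=
        Finset.sum_le_sum fun a _ => abs_sub_le ..
    _ = ∑ a, |stateActionMass π' (f' - f) s a| +
          ∑ a, |stateActionMass π' f s a - stateActionMass π f s a| := by
        simp only [Finset.sum_add_distrib, map_sub, Pi.sub_apply]
    _ = |f' s - f s| + 2 * (|f s| * dTV π' π s) := by
        rw [sum_abs_stateActionMass, sum_abs_stateActionMass_sub, Pi.sub_apply]

/-- The mass `s' ↦ ∑ s, ∑ a, μ(s, a) P(s'|s, a)` of successor states when the state-action mass `μ`,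
an arbitrary real function, moves according to the transition kernel `P`. -/
noncomputable def nextStateMass (P : S → A → PMF T) : (S → A → ℝ) →ₗ[ℝ] T → ℝ where
  toFun μ s' := ∑ s, ∑ a, μ s a * (P s a s').toReal
  map_add' μ ν := by
    ext s'
    simp only [Pi.add_apply, add_mul, Finset.sum_add_distrib]
  map_smul' c μ := by
    ext s'
    simp only [Pi.smul_apply, smul_eq_mul, mul_assoc, Finset.mul_sum, RingHom.id_apply]

lemma sum_abs_nextStateMass_le [Fintype T] (P : S → A → PMF T) (μ : S → A → ℝ) :
    ∑ s', |nextStateMass P μ s'| ≤ ∑ s, ∑ a, |μ s a| := by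
  calc ∑ s', |nextStateMass P μ s'|
      ≤ ∑ s', ∑ s, ∑ a, |μ s a| * (P s a s').toReal := by
        refine Finset.sum_le_sum fun s' _ => (Finset.abs_sum_le_sum_abs _ _).trans <|
          Finset.sum_le_sum fun s _ => (Finset.abs_sum_le_sum_abs _ _).trans_eq ?_
        simp only [abs_mul, ENNReal.abs_toReal]
    _ = ∑ s, ∑ a, ∑ s', |μ s a| * (P s a s').toReal := by
        rw [Finset.sum_comm]
        exact Finset.sum_congr rfl fun s _ => Finset.sum_comm
    _ = ∑ s, ∑ a, |μ s a| := by
        simp only [← Finset.mul_sum, sum_pmf_toReal, mul_one]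

theorem sum_abs_sub_le_of_balance {P : S → A → PMF S} {π π' : S → PMF A} {g f f' : S → ℝ} {γ : ℝ}
    (hγ : 0 ≤ γ) (hf : f = g + γ • nextStateMass P (stateActionMass π f))
    (hf' : f' = g + γ • nextStateMass P (stateActionMass π' f')) :
    (1 - γ) * ∑ s, |f' s - f s| ≤ 2 * γ * ∑ s, |f s| * dTV π' π s := by
  have sub_eq : f' - f =
      γ • nextStateMass P (stateActionMass π' f' - stateActionMass π f) := by
    conv_lhs => rw [hf, hf']
    rw [add_sub_add_left_eq_sub, ← smul_sub, ← map_sub]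
  have contraction : ∑ s, |f' s - f s| ≤
      γ * (∑ s, |f' s - f s| + 2 * ∑ s, |f s| * dTV π' π s) := calc
    ∑ s, |f' s - f s|
      = γ * ∑ s, |nextStateMass P (stateActionMass π' f' - stateActionMass π f) s| := by
        simp only [← Pi.sub_apply, sub_eq, Pi.smul_apply, smul_eq_mul, abs_mul, abs_of_nonneg hγ,
          Finset.mul_sum]
    _ ≤ γ * ∑ s, ∑ a, |stateActionMass π' f' s a - stateActionMass π f s a| :=
        mul_le_mul_of_nonneg_left (sum_abs_nextStateMass_le P _) hγ
    _ ≤ γ * (∑ s, |f' s - f s| + 2 * ∑ s, |f s| * dTV π' π s) :=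
        mul_le_mul_of_nonneg_left (sum_abs_stateActionMass_sub_le π π' f f') hγ
  linarith

end Flow

section Visitation

variable {S A : Type*} [Fintype S] [Fintype A] (P : S → A → PMF S) (ρ0 : PMF S) (π : S → PMF A)

lemma stateMarginal_succ (t : ℕ) :
    stateMarginal P ρ0 π (t + 1) =
      nextStateMass P (stateActionMass π (stateMarginal P ρ0 π t)) := rfl

lemma stateMarginal_nonneg (t : ℕ) (s : S) : 0 ≤ stateMarginal P ρ0 π t s := by
  induction t generalizing s with
  | zero => exact ENNReal.toReal_nonneg
  | succ t ih =>
    exact Finset.sum_nonneg fun s _ => Finset.sum_nonneg fun a _ =>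
      mul_nonneg (mul_nonneg (ih s) ENNReal.toReal_nonneg) ENNReal.toReal_nonneg

lemma sum_abs_stateMarginal_le_one (t : ℕ) : ∑ s, |stateMarginal P ρ0 π t s| ≤ 1 := by
  induction t with
  | zero => simp only [stateMarginal, ENNReal.abs_toReal, sum_pmf_toReal, le_refl]
  | succ t ih =>
    calc ∑ s, |stateMarginal P ρ0 π (t + 1) s|
        ≤ ∑ s, ∑ a, |stateActionMass π (stateMarginal P ρ0 π t) s a| :=
          sum_abs_nextStateMass_le P _
      _ = ∑ s, |stateMarginal P ρ0 π t s| := by simp only [sum_abs_stateActionMass]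
      _ ≤ 1 := ih

lemma abs_stateMarginal_le_one (t : ℕ) (s : S) : |stateMarginal P ρ0 π t s| ≤ 1 :=
  (Finset.single_le_sum (f := fun s => |stateMarginal P ρ0 π t s|) (fun _ _ => abs_nonneg _)
    (Finset.mem_univ s)).trans (sum_abs_stateMarginal_le_one P ρ0 π t)

variable {γ : ℝ}

lemma summable_pow_smul_stateMarginal (hγ : |γ| < 1) :
    Summable fun t => γ ^ t • stateMarginal P ρ0 π t := by
  refine Pi.summable.mpr fun s => .of_norm_bounded (summable_geometric_of_lt_one (abs_nonneg γ) hγ)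
    fun t => ?_
  rw [Pi.smul_apply, smul_eq_mul, Real.norm_eq_abs, abs_mul, abs_pow]
  exact mul_le_of_le_one_right (by positivity) (abs_stateMarginal_le_one P ρ0 π t s)

lemma dVisit_eq_smul_tsum (hγ : |γ| < 1) :
    dVisit P ρ0 γ π = (1 - γ) • ∑' t, γ ^ t • stateMarginal P ρ0 π t := by
  ext s
  rw [Pi.smul_apply, tsum_apply (summable_pow_smul_stateMarginal P ρ0 π hγ)]
  rfl

theorem dVisit_balance (hγ : |γ| < 1) :
    dVisit P ρ0 γ π = (1 - γ) • stateMarginal P ρ0 π 0 +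
      γ • nextStateMass P (stateActionMass π (dVisit P ρ0 γ π)) := by
  let L := (nextStateMass P ∘ₗ stateActionMass π).toContinuousLinearMap
  have balance := tsum_pow_smul_eq_add_smul_map (L := L) (stateMarginal_succ P ρ0 π)
    (summable_pow_smul_stateMarginal P ρ0 π hγ)
  calc dVisit P ρ0 γ π
      = (1 - γ) • (stateMarginal P ρ0 π 0 + γ • L (∑' t, γ ^ t • stateMarginal P ρ0 π t)) := by
        rw [dVisit_eq_smul_tsum P ρ0 π hγ, ← balance]
    _ = (1 - γ) • stateMarginal P ρ0 π 0 + γ • L (dVisit P ρ0 γ π) := by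
        rw [dVisit_eq_smul_tsum P ρ0 π hγ, map_smul, smul_add, smul_comm]

lemma dVisit_nonneg (hγ0 : 0 ≤ γ) (hγ1 : γ ≤ 1) (s : S) : 0 ≤ dVisit P ρ0 γ π s :=
  mul_nonneg (sub_nonneg.mpr hγ1) <| tsum_nonneg fun t =>
    mul_nonneg (pow_nonneg hγ0 t) (stateMarginal_nonneg P ρ0 π t s)

end Visitation

/-- Appendix Lemma 4: the ℓ¹-distance between discounted future state visitation
distributions is bounded by an average divergence of the policies. -/
theorem tace_appendix_lemma_four
    {S A : Type*} [Fintype S] [Fintype A] [Nonempty S] [Nonempty A]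
    (P : S → A → PMF S) (ρ0 : PMF S) (γ : ℝ) (hγ0 : 0 ≤ γ) (hγ1 : γ < 1)
    (π π' : S → PMF A) :
    ∑ s : S, |dVisit P ρ0 γ π' s - dVisit P ρ0 γ π s| ≤
      (2 * γ / (1 - γ)) * ∑ s : S, dVisit P ρ0 γ π s * dTV π' π s := by
  have hγ : |γ| < 1 := by rwa [abs_of_nonneg hγ0]
  have bound := sum_abs_sub_le_of_balance hγ0 (dVisit_balance P ρ0 π hγ) (dVisit_balance P ρ0 π' hγ)
  simp only [abs_of_nonneg (dVisit_nonneg P ρ0 π hγ0 hγ1.le _)] at bound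
  rwa [div_mul_eq_mul_div, le_div_iff₀' (sub_pos.mpr hγ1)]
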